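/- Let G = A *_C B be an amalgamated free product (with C embedded in A and in B via the given injections, and A, B identified with their images in G). Let g ∈ A and suppose that no conjugate of g by an element of A lies in C. If g' ∈ A ∪ B and g is conjugate in G to g', then g' ∈ A and g is conjugate to g' by an element of A. -/

import Mathlib

universe u

/-- The two-element family of groups `A, B`, indexed by `Bool`. -/
abbrev pairFam (A B : Type u) : Bool → Type u := fun b => cond b A B

instance pairFamGroup {A B : Type u} [Group A] [Group B] : ∀ b, Group (pairFam A B b) :=
  fun b => match b with
  | true => ‹Group A›
  | false => ‹Group B›

/-- The pair of edge inclusions `ι_A : C →* A`, `ι_B : C →* B` as a family indexed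
by `Bool`. -/
abbrev pairHom {A B : Type u} {C : Type*} [Group A] [Group B] [Group C]
    (ιA : C →* A) (ιB : C →* B) : ∀ b, C →* pairFam A B b :=
  fun b => match b with
  | true => ιA
  | false => ιB

/-!
Relative to the factor `G i`, every `u⁻¹` can be written as `a * W` with `a` in `G i` and `W` a
reduced word that does not begin in `G i`. Hence `u * g * u⁻¹ = W⁻¹ * (a⁻¹ * g * a) * W`, and if no
`G i`-conjugate of `g` lies in the base group this expression is again reduced. When `W` is
nonempty it has at least three letters, whereas a reduced word representing an element of a single
factor has at most one; so `W` is empty and `u` lies in `G i`.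
-/

section Amalgam

open Monoid Monoid.CoprodI Monoid.PushoutI

variable {ι : Type*} {G : ι → Type*} {H : Type*} [∀ i, Group (G i)] [Group H]
  {φ : ∀ i, H →* G i}

theorem neWord_toList_inv {i j : ι} (w : NeWord G i j) :
    w.inv.toList = (w.toList.map fun p => ⟨p.1, p.2⁻¹⟩).reverse := by
  induction w <;> simp [NeWord.inv, *]

theorem reduced_toWord_singleton_iff {i : ι} {x : G i} (hx : x ≠ 1) :
    Reduced φ (NeWord.singleton x hx).toWord ↔ x ∉ (φ i).range := by
  simp [Reduced, NeWord.toWord]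

theorem reduced_toWord_append_iff {i j k l : ι} {v : NeWord G i j} {hne : j ≠ k}
    {w : NeWord G k l} :
    Reduced φ (v.append hne w).toWord ↔ Reduced φ v.toWord ∧ Reduced φ w.toWord := by
  simp only [Reduced, NeWord.toWord, NeWord.toList, List.forall_mem_append]

theorem reduced_toWord_inv_iff {i j : ι} {w : NeWord G i j} :
    Reduced φ w.inv.toWord ↔ Reduced φ w.toWord := by
  simp only [Reduced, NeWord.toWord, neWord_toList_inv, List.mem_reverse, List.forall_mem_map,
    inv_mem_iff]

theorem reduced_normalWord_toWord {d : NormalWord.Transversal φ} (w : NormalWord d) :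
    Reduced φ w.toWord := by
  rintro ⟨i, x⟩ hx hxφ
  have snd_eq_one := ((d.compl i).coe_equiv_snd_eq_one_iff_mem (d.one_mem i)).2 hxφ
  have snd_eq_self := ((d.compl i).equiv_snd_eq_self_iff_mem (one_mem _)).2 (w.normalized i x hx)
  exact w.ne_one _ hx (snd_eq_self.symm.trans snd_eq_one)

theorem normalWord_prod_surjective (d : NormalWord.Transversal φ) :
    Function.Surjective (NormalWord.prod : NormalWord d → PushoutI φ) := by
  classical exact NormalWord.equiv.symm.surjective

theorem exists_reduced_of_mul_prod_eq (hφ : ∀ i, Function.Injective (φ i)) (i : ι)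
    (u : PushoutI φ) :
    ∃ (a : G i) (w : Word G), Reduced φ w ∧ w.fstIdx ≠ some i ∧ of i a * ofCoprodI w.prod = u := by
  classical
  obtain ⟨d⟩ := NormalWord.transversal_nonempty φ hφ
  obtain ⟨w, rfl⟩ := normalWord_prod_surjective d u
  set p := Word.equivPair i w.toWord with hp
  have prod_eq : w.toWord.prod = CoprodI.of p.head * p.tail.prod := by
    rw [← Word.prod_rcons, ← Word.equivPair_symm, hp, Equiv.symm_apply_apply]
  refine ⟨φ i w.head * p.head, p.tail, fun x hx => ?_, p.fstIdx_ne, ?_⟩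
  · exact reduced_normalWord_toWord w x (Word.mem_of_mem_equivPair_tail _ hx)
  · rw [NormalWord.prod, prod_eq, map_mul, map_mul, of_apply_eq_base, ofCoprodI_of, mul_assoc]

theorem reduced_map_fst_eq_of_prod_eq (hφ : ∀ i, Function.Injective (φ i)) {v w : Word G}
    (hv : Reduced φ v) (hw : Reduced φ w)
    (h : (ofCoprodI v.prod : PushoutI φ) = ofCoprodI w.prod) :
    v.toList.map Sigma.fst = w.toList.map Sigma.fst := by
  obtain ⟨d⟩ := NormalWord.transversal_nonempty φ hφ
  obtain ⟨v', hv'prod, hv'map⟩ := hv.exists_normalWord_prod_eq d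
  obtain ⟨w', hw'prod, hw'map⟩ := hw.exists_normalWord_prod_eq d
  have : v' = w' := NormalWord.prod_injective (by rw [hv'prod, hw'prod, h])
  rw [← hv'map, ← hw'map, this]

theorem reduced_length_le_one_of_prod_mem_range_of (hφ : ∀ i, Function.Injective (φ i)) {w : Word G}
    (hw : Reduced φ w) {j : ι} (h : ofCoprodI w.prod ∈ (of (φ := φ) j).range) :
    w.toList.length ≤ 1 := by
  obtain ⟨b, hb⟩ := h
  by_cases hbφ : b ∈ (φ j).range
  · obtain ⟨c, rfl⟩ := hbφ
    have : w = .empty := hw.eq_empty_of_mem_range hφ ⟨c, by rw [← hb, of_apply_eq_base]⟩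
    simp [this, Word.empty]
  · have hb1 : b ≠ 1 := fun h => hbφ (h ▸ one_mem _)
    have hprod : ofCoprodI (NeWord.singleton b hb1).prod = of (φ := φ) j b := by simp
    have := reduced_map_fst_eq_of_prod_eq hφ hw ((reduced_toWord_singleton_iff hb1).2 hbφ)
      (hb.symm.trans hprod.symm)
    simpa [NeWord.toWord] using (congrArg List.length this).le

theorem conj_prod_notMem_range_of (hφ : ∀ i, Function.Injective (φ i)) {i j k l : ι}
    {w : NeWord G k l} (hw : Reduced φ w.toWord) (hki : k ≠ i) {g : G i}
    (hg : g ∉ (φ i).range) :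
    (ofCoprodI w.prod)⁻¹ * of i g * ofCoprodI w.prod ∉ (of (φ := φ) j).range := by
  have hg1 : g ≠ 1 := fun h => hg (h ▸ one_mem _)
  let v := (w.inv.append hki (.singleton g hg1)).append hki.symm w
  have hv : Reduced φ v.toWord := by
    simp only [v, reduced_toWord_append_iff, reduced_toWord_inv_iff, reduced_toWord_singleton_iff]
    exact ⟨⟨hw, hg⟩, hw⟩
  have hv_prod : ofCoprodI v.prod =
      (ofCoprodI w.prod)⁻¹ * of (φ := φ) i g * ofCoprodI w.prod := by
    simp [v]
  have hv_length : 1 < v.toList.length := by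
    have := List.length_pos_iff.2 w.toList_ne_nil
    simp only [v, NeWord.toList, List.length_append, List.length_singleton]
    lia
  rw [← hv_prod]
  exact fun h => (reduced_length_le_one_of_prod_mem_range_of hφ hv h).not_gt hv_length

theorem amalgam_conjugacy_into_factor_general (hφ : ∀ i, Function.Injective (φ i)) {i : ι}
    {g : G i} (hg : ∀ x : G i, x * g * x⁻¹ ∉ (φ i).range) {u : PushoutI φ}
    (hu : ∃ j, u * of i g * u⁻¹ ∈ (of (φ := φ) j).range) :
    u ∈ (of (φ := φ) i).range := by
  obtain ⟨j, hu⟩ := hu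
  obtain ⟨a, w, hw, hw_fst, hu_inv⟩ := exists_reduced_of_mul_prod_eq hφ i u⁻¹
  have hu_eq : u = (ofCoprodI w.prod)⁻¹ * of i a⁻¹ := by
    rw [← inv_inv u, ← hu_inv, mul_inv_rev, map_inv]
  obtain rfl | hw_ne := eq_or_ne w .empty
  · exact ⟨a⁻¹, by simp [hu_eq]⟩
  obtain ⟨k, l, w, rfl⟩ := NeWord.of_word w hw_ne
  have hki : k ≠ i := by simpa [Word.fstIdx, NeWord.toWord] using hw_fst
  refine absurd ?_ (conj_prod_notMem_range_of hφ hw hki (hg a⁻¹) (j := j))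
  convert hu using 1
  simp only [hu_eq, NeWord.prod, map_mul, map_inv, mul_inv_rev, inv_inv, mul_assoc]

end Amalgam

/-- In an amalgamated free product `G = A *_C B`, if `g ∈ A` has no conjugate by an
element of `A` lying in (the image of) `C`, and `g' ∈ A ∪ B` is conjugate in `G` to
`g`, then `g' ∈ A` and `g` is conjugate to `g'` by an element of `A`. -/
theorem amalgam_conjugacy_into_factor {A B : Type u} {C : Type*}
    [Group A] [Group B] [Group C]
    (ιA : C →* A) (ιB : C →* B)
    (hιA : Function.Injective ιA) (hιB : Function.Injective ιB)
    (g : A) (hg : ∀ x : A, x * g * x⁻¹ ∉ Set.range ιA)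
    (g' : Monoid.PushoutI (pairHom ιA ιB))
    (hg' : (∃ a' : A, Monoid.PushoutI.of (φ := pairHom ιA ιB) true a' = g') ∨
           (∃ b' : B, Monoid.PushoutI.of (φ := pairHom ιA ιB) false b' = g'))
    (hconj : ∃ u : Monoid.PushoutI (pairHom ιA ιB),
      u * Monoid.PushoutI.of (φ := pairHom ιA ιB) true g * u⁻¹ = g') :
    (∃ a' : A, Monoid.PushoutI.of (φ := pairHom ιA ιB) true a' = g') ∧
    ∃ x : A, Monoid.PushoutI.of (φ := pairHom ιA ιB) true (x * g * x⁻¹) = g' := by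
  obtain ⟨u, rfl⟩ := hconj
  obtain ⟨x, rfl⟩ := amalgam_conjugacy_into_factor_general (φ := pairHom ιA ιB) (i := true)
    (Bool.forall_bool.2 ⟨hιB, hιA⟩) (g := g) hg (Bool.exists_bool.2 hg'.symm)
  rw [← map_inv, ← map_mul, ← map_mul]
  exact ⟨⟨_, rfl⟩, x, rfl⟩
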